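/- arXiv:1909.06155 — 2 statements merged into one kernel-verified Lean document; each statement's English description precedes it below -/
import Mathlib

section
/- For every real θ > 0 and every H ∈ (0,1), θ² ∫₀^∞ ∫₀^∞ e^{-θs} e^{-θt} · ( t^{2H} + s^{2H} − (1/2)((t+s)^{2H} + |t−s|^{2H}) ) ds dt = (1−H) Γ(2H+1) / θ^{2H}. (This is the variance of the limit random variable ζ_{S^H,∞} = θ ∫₀^∞ e^{-θs} S^H_s ds, computed from the covariance function of subfractional Brownian motion.) -/
open MeasureTheory Filter Set

/-!
Absorbing `θ²` into the two exponentials turns the left-hand side into `𝔼[R(σ, τ)]`, where `σ` and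
`τ` are independent exponential variables of rate `θ` and `R` is the covariance function. Then
`σ + τ` has the gamma law of shape `2`, since gamma laws of equal rate convolve by adding shapes,
and `|σ - τ|` is again exponential of rate `θ`, by lack of memory. So all four terms of `R` are
moments of order `2H` of gamma laws: with `M = Γ(2H + 1) / θ ^ (2H)` they are `M`, `M`,
`(2H + 1) M` and `M`, and `M + M - ((2H + 1) M + M) / 2 = (1 - H) M`.
-/

open ProbabilityTheory

lemma gammaMeasure_eq_withDensity_restrict_Ioi (a r : ℝ) :
    gammaMeasure a r = (volume.restrict (Ioi 0)).withDensity
      (fun x ↦ ENNReal.ofReal (r ^ a / Real.Gamma a * x ^ (a - 1) * Real.exp (-(r * x)))) := by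
  rw [← withDensity_indicator measurableSet_Ioi]
  refine withDensity_congr_ae ?_
  filter_upwards [Measure.ae_ne volume (0 : ℝ)] with x hx
  by_cases h : 0 < x
  · rw [indicator_of_mem (mem_Ioi.mpr h), gammaPDF_of_nonneg h.le]
  · rw [indicator_of_notMem (notMem_Ioi.mpr (not_lt.mp h)),
      gammaPDF_of_neg (lt_of_le_of_ne (not_lt.mp h) hx)]

lemma expMeasure_eq_withDensity_restrict_Ioi (r : ℝ) :
    expMeasure r = (volume.restrict (Ioi 0)).withDensity
      (fun x ↦ ENNReal.ofReal (r * Real.exp (-(r * x)))) := by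
  simp [expMeasure, gammaMeasure_eq_withDensity_restrict_Ioi]

lemma ae_pos_gammaMeasure (a r : ℝ) : ∀ᵐ x ∂gammaMeasure a r, 0 < x := by
  rw [gammaMeasure_eq_withDensity_restrict_Ioi]
  exact withDensity_absolutelyContinuous _ _ (ae_restrict_mem measurableSet_Ioi)

lemma integrable_gammaMeasure_iff {E : Type*} [NormedAddCommGroup E] [NormedSpace ℝ E]
    {a r : ℝ} (ha : 0 < a) (hr : 0 < r) {f : ℝ → E} :
    Integrable f (gammaMeasure a r) ↔ IntegrableOn
      (fun x ↦ (r ^ a / Real.Gamma a * x ^ (a - 1) * Real.exp (-(r * x))) • f x) (Ioi 0) := by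
  rw [gammaMeasure_eq_withDensity_restrict_Ioi, integrable_withDensity_iff_integrable_smul'
    (by fun_prop) (by simp)]
  refine integrable_congr ?_
  filter_upwards [ae_restrict_mem measurableSet_Ioi] with x (hx : 0 < x)
  rw [ENNReal.toReal_ofReal (by positivity)]

lemma integral_gammaMeasure {E : Type*} [NormedAddCommGroup E] [NormedSpace ℝ E]
    {a r : ℝ} (ha : 0 < a) (hr : 0 < r) (f : ℝ → E) :
    ∫ x, f x ∂gammaMeasure a r =
      ∫ x in Ioi 0, (r ^ a / Real.Gamma a * x ^ (a - 1) * Real.exp (-(r * x))) • f x := by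
  rw [gammaMeasure_eq_withDensity_restrict_Ioi, integral_withDensity_eq_integral_toReal_smul
    (by fun_prop) (by simp)]
  refine setIntegral_congr_fun measurableSet_Ioi fun x (hx : 0 < x) ↦ ?_
  rw [ENNReal.toReal_ofReal (by positivity)]

lemma eqOn_gamma_density_smul_rpow (a r p : ℝ) :
    EqOn (fun x ↦ (r ^ a / Real.Gamma a * x ^ (a - 1) * Real.exp (-(r * x))) • x ^ p)
      (fun x ↦ r ^ a / Real.Gamma a * (x ^ (a + p - 1) * Real.exp (-(r * x)))) (Ioi 0) := by
  intro x (hx : 0 < x)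
  simp only [add_sub_right_comm, Real.rpow_add hx, smul_eq_mul]
  ring

lemma integrable_rpow_gammaMeasure {a r p : ℝ} (ha : 0 < a) (hr : 0 < r) (hap : 0 < a + p) :
    Integrable (fun x ↦ x ^ p) (gammaMeasure a r) := by
  rw [integrable_gammaMeasure_iff ha hr,
    integrableOn_congr_fun (eqOn_gamma_density_smul_rpow a r p) measurableSet_Ioi]
  have h : IntegrableOn (fun x ↦ x ^ (a + p - 1) * Real.exp (-(r * x))) (Ioi 0) := by
    simpa using
      integrableOn_rpow_mul_exp_neg_mul_rpow (s := a + p - 1) (by linarith) one_pos hr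
  exact h.const_mul _

lemma integral_rpow_gammaMeasure {a r p : ℝ} (ha : 0 < a) (hr : 0 < r) (hap : 0 < a + p) :
    ∫ x, x ^ p ∂gammaMeasure a r = Real.Gamma (a + p) / (Real.Gamma a * r ^ p) := by
  rw [integral_gammaMeasure ha hr,
    setIntegral_congr_fun measurableSet_Ioi (eqOn_gamma_density_smul_rpow a r p),
    integral_const_mul, Real.integral_rpow_mul_exp_neg_mul_Ioi hap hr, one_div,
    Real.inv_rpow hr.le, Real.rpow_add hr]
  field_simp

lemma measurable_gammaPDF (a r : ℝ) : Measurable (gammaPDF a r) :=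
  (measurable_gammaPDFReal a r).ennreal_ofReal

lemma lintegral_exp_neg_mul_gammaMeasure {a r s : ℝ} (ha : 0 < a) (hr : 0 < r) (hrs : 0 < r + s) :
    ∫⁻ x, ENNReal.ofReal (Real.exp (-(s * x))) ∂gammaMeasure a r =
      ENNReal.ofReal ((r / (r + s)) ^ a) := by
  have tilt (x : ℝ) : gammaPDF a r x * ENNReal.ofReal (Real.exp (-(s * x))) =
      ENNReal.ofReal ((r / (r + s)) ^ a) * gammaPDF a (r + s) x := by
    rw [gammaPDF, gammaPDF, ← ENNReal.ofReal_mul (gammaPDFReal_nonneg ha hr x),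
      ← ENNReal.ofReal_mul (by positivity), gammaPDFReal, gammaPDFReal,
      Real.div_rpow hr.le hrs.le]
    congr 1
    split_ifs
    · rw [mul_assoc _ (Real.exp _), ← Real.exp_add]
      field_simp
      ring_nf
    · simp
  rw [gammaMeasure, lintegral_withDensity_eq_lintegral_mul _
    (measurable_gammaPDF a r) (by fun_prop)]
  simp_rw [Pi.mul_apply, tilt]
  rw [lintegral_const_mul' _ _ ENNReal.ofReal_ne_top, lintegral_gammaPDF_eq_one ha hrs, mul_one]

/- For independent gamma variables `X`, `Y` of equal rate, the sum `X + Y` is gamma distributed, the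
ratio `X / (X + Y)` is beta distributed, and the two are independent. -/
lemma gammaPDF_mul_gammaPDF_sub {a b r x y : ℝ} (ha : 0 < a) (hb : 0 < b) (hr : 0 < r) (hx : 0 < x)
    (hy : y ≠ 0) (hyx : y ≠ x) :
    gammaPDF a r y * gammaPDF b r (x - y) =
      gammaPDF (a + b) r x * (ENNReal.ofReal x⁻¹ * betaPDF a b (x⁻¹ * y)) := by
  rcases hy.lt_or_gt with hneg | hpos
  · rw [gammaPDF_of_neg hneg, betaPDF_eq_zero_of_nonpos]
    · simp
    · exact mul_nonpos_of_nonneg_of_nonpos (by positivity) hneg.le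
  rcases hyx.lt_or_gt with hlt | hgt
  · have hsub : 0 < x - y := sub_pos.mpr hlt
    have hlt_one : x⁻¹ * y < 1 := by rwa [inv_mul_lt_iff₀ hx, mul_one]
    have hone_sub : 1 - x⁻¹ * y = x⁻¹ * (x - y) := by field_simp
    rw [gammaPDF_of_nonneg hpos.le, gammaPDF_of_nonneg hsub.le, gammaPDF_of_nonneg hx.le,
      betaPDF_of_pos_lt_one (by positivity) hlt_one, hone_sub,
      ← ENNReal.ofReal_mul (by positivity), ← ENNReal.ofReal_mul (by positivity),
      ← ENNReal.ofReal_mul (by positivity)]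
    congr 1
    have hexp : Real.exp (-(r * x)) = Real.exp (-(r * y)) * Real.exp (-(r * (x - y))) := by
      rw [← Real.exp_add]; ring_nf
    have hpow : x ^ (a + b - 1) = x * x ^ (a - 1) * x ^ (b - 1) := by
      rw [← Real.rpow_one_add' hx.le (by simpa using ha.ne'), ← Real.rpow_add hx]; ring_nf
    rw [hexp, hpow, Real.rpow_add hr, Real.mul_rpow (by positivity) hpos.le,
      Real.mul_rpow (by positivity) hsub.le, Real.inv_rpow hx.le, Real.inv_rpow hx.le, beta]
    field_simp
  · rw [gammaPDF_of_neg (sub_neg.mpr hgt), betaPDF_eq_zero_of_one_le]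
    · simp
    · rw [le_inv_mul_iff₀ hx, mul_one]; exact hgt.le

lemma lintegral_inv_mul_betaPDF {a b x : ℝ} (ha : 0 < a) (hb : 0 < b) (hx : 0 < x) :
    ∫⁻ y, ENNReal.ofReal x⁻¹ * betaPDF a b (x⁻¹ * y) = 1 := by
  have hm : Measurable (betaPDF a b) := (measurable_betaPDFReal a b).ennreal_ofReal
  rw [lintegral_const_mul' _ _ ENNReal.ofReal_ne_top,
    ← lintegral_map hm (measurable_const_mul x⁻¹), Real.map_volume_mul_left (inv_ne_zero hx.ne'),
    lintegral_smul_measure, lintegral_betaPDF_eq_one ha hb, inv_inv, abs_of_pos hx,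
    smul_eq_mul, mul_one, ← ENNReal.ofReal_mul (by positivity), inv_mul_cancel₀ hx.ne',
    ENNReal.ofReal_one]

lemma lconvolution_gammaPDF_of_pos {a b r x : ℝ} (ha : 0 < a) (hb : 0 < b) (hr : 0 < r)
    (hx : 0 < x) : (gammaPDF a r ⋆ₗ gammaPDF b r) x = gammaPDF (a + b) r x := by
  calc ∫⁻ y, gammaPDF a r y * gammaPDF b r (-y + x)
    _ = ∫⁻ y, gammaPDF (a + b) r x * (ENNReal.ofReal x⁻¹ * betaPDF a b (x⁻¹ * y)) := by
      refine lintegral_congr_ae ?_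
      filter_upwards [Measure.ae_ne volume 0, Measure.ae_ne volume x] with y hy hyx
      rw [neg_add_eq_sub, gammaPDF_mul_gammaPDF_sub ha hb hr hx hy hyx]
    _ = gammaPDF (a + b) r x := by
      rw [lintegral_const_mul' (gammaPDF (a + b) r x) _ ENNReal.ofReal_ne_top,
        lintegral_inv_mul_betaPDF ha hb hx, mul_one]

lemma lconvolution_gammaPDF_of_neg (a b r : ℝ) {x : ℝ} (hx : x < 0) :
    (gammaPDF a r ⋆ₗ gammaPDF b r) x = 0 := by
  rw [lconvolution_def]
  refine lintegral_eq_zero_of_ae_eq_zero (ae_of_all _ fun y ↦ ?_)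
  rcases lt_or_ge y 0 with hy | hy
  · simp [gammaPDF_of_neg hy]
  · simp [gammaPDF_of_neg (show -y + x < 0 by linarith)]

lemma gammaMeasure_conv_gammaMeasure {a b r : ℝ} (ha : 0 < a) (hb : 0 < b) (hr : 0 < r) :
    gammaMeasure a r ∗ gammaMeasure b r = gammaMeasure (a + b) r := by
  rw [gammaMeasure, gammaMeasure, gammaMeasure,
    conv_withDensity_eq_lconvolution (measurable_gammaPDF a r) (measurable_gammaPDF b r)]
  refine withDensity_congr_ae ?_
  filter_upwards [Measure.ae_ne volume (0 : ℝ)] with x hx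
  rcases hx.lt_or_gt with hneg | hpos
  · rw [lconvolution_gammaPDF_of_neg a b r hneg, gammaPDF_of_neg hneg]
  · exact lconvolution_gammaPDF_of_pos ha hb hr hpos

lemma expMeasure_Ioi {r z : ℝ} (hr : 0 < r) (hz : 0 ≤ z) :
    expMeasure r (Ioi z) = ENNReal.ofReal (Real.exp (-(r * z))) := by
  have := isProbabilityMeasure_expMeasure hr
  rw [← compl_Iic, prob_compl_eq_one_sub measurableSet_Iic, ← ofReal_cdf, cdf_expMeasure_eq hr,
    if_pos hz, ← ENNReal.ofReal_one, ← ENNReal.ofReal_sub]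
  · rw [sub_sub_cancel]
  · exact sub_nonneg.mpr (Real.exp_le_one_iff.mpr (neg_nonpos.mpr (by positivity)))

lemma expMeasure_prod_expMeasure_setOf_add_lt {q r z : ℝ} (hq : 0 < q) (hr : 0 < r) (hz : 0 ≤ z) :
    (expMeasure r).prod (expMeasure q) {p | p.2 + z < p.1} =
      ENNReal.ofReal (q / (q + r) * Real.exp (-(r * z))) := by
  have := isProbabilityMeasure_expMeasure hr
  have := isProbabilityMeasure_expMeasure hq
  rw [Measure.prod_apply_symm (measurableSet_lt (by fun_prop) (by fun_prop))]
  calc ∫⁻ y, expMeasure r (Ioi (y + z)) ∂expMeasure q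
    _ = ∫⁻ y, ENNReal.ofReal (Real.exp (-(r * y))) * ENNReal.ofReal (Real.exp (-(r * z)))
          ∂expMeasure q := by
      refine lintegral_congr_ae ?_
      filter_upwards [ae_pos_gammaMeasure 1 q] with y hy
      rw [expMeasure_Ioi hr (by positivity), ← ENNReal.ofReal_mul (by positivity), ← Real.exp_add]
      ring_nf
    _ = ENNReal.ofReal (q / (q + r) * Real.exp (-(r * z))) := by
      rw [lintegral_mul_const' _ _ ENNReal.ofReal_ne_top, expMeasure,
        lintegral_exp_neg_mul_gammaMeasure one_pos hq (by positivity), Real.rpow_one,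
        ← ENNReal.ofReal_mul (by positivity)]

lemma expMeasure_prod_expMeasure_setOf_lt_abs_sub {r z : ℝ} (hr : 0 < r) (hz : 0 ≤ z) :
    (expMeasure r).prod (expMeasure r) {p | z < |p.1 - p.2|} =
      ENNReal.ofReal (Real.exp (-(r * z))) := by
  have := isProbabilityMeasure_expMeasure hr
  have hsplit : {p : ℝ × ℝ | z < |p.1 - p.2|} =
      {p | p.2 + z < p.1} ∪ {p | p.1 + z < p.2} := by
    ext p
    simp only [mem_ofPred_eq, mem_union, lt_abs, neg_sub, lt_sub_iff_add_lt']
  have hmeas : MeasurableSet {p : ℝ × ℝ | p.2 + z < p.1} :=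
    measurableSet_lt (by fun_prop) (by fun_prop)
  have hdisj : Disjoint {p : ℝ × ℝ | p.2 + z < p.1} {p | p.1 + z < p.2} :=
    disjoint_left.mpr fun p (h₁ : p.2 + z < p.1) (h₂ : p.1 + z < p.2) ↦ by linarith
  have hswap : (expMeasure r).prod (expMeasure r) {p | p.1 + z < p.2} =
      (expMeasure r).prod (expMeasure r) {p | p.2 + z < p.1} :=
    (Measure.measurePreserving_swap (μ := expMeasure r) (ν := expMeasure r)).measure_preimage
      hmeas.nullMeasurableSet
  rw [hsplit, measure_union hdisj (measurableSet_lt (by fun_prop) (by fun_prop)), hswap,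
    expMeasure_prod_expMeasure_setOf_add_lt hr hr hz, ← ENNReal.ofReal_add (by positivity)
      (by positivity)]
  congr 1
  field_simp

lemma hasLaw_abs_sub_expMeasure {r : ℝ} (hr : 0 < r) :
    HasLaw (fun p : ℝ × ℝ ↦ |p.1 - p.2|) (expMeasure r)
      ((expMeasure r).prod (expMeasure r)) where
  map_eq := by
    have := isProbabilityMeasure_expMeasure hr
    have hmeas : Measurable fun p : ℝ × ℝ ↦ |p.1 - p.2| := by fun_prop
    have := Measure.isProbabilityMeasure_map (μ := (expMeasure r).prod (expMeasure r))
      hmeas.aemeasurable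
    refine Measure.ext_of_Iic _ _ fun z ↦ ?_
    rcases lt_or_ge z 0 with hz | hz
    · have hempty : (fun p : ℝ × ℝ ↦ |p.1 - p.2|) ⁻¹' Iic z = ∅ :=
        eq_empty_of_forall_notMem fun p hp ↦ hz.not_ge ((abs_nonneg _).trans hp)
      rw [Measure.map_apply hmeas measurableSet_Iic, hempty, measure_empty, ← ofReal_cdf,
        cdf_expMeasure_eq hr, if_neg hz.not_ge, ENNReal.ofReal_zero]
    · rw [← compl_Ioi, prob_compl_eq_one_sub measurableSet_Ioi,
        prob_compl_eq_one_sub measurableSet_Ioi, Measure.map_apply hmeas measurableSet_Ioi]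
      congr 1
      exact (expMeasure_prod_expMeasure_setOf_lt_abs_sub hr hz).trans (expMeasure_Ioi hr hz).symm

lemma hasLaw_add_gammaMeasure {a b r : ℝ} (ha : 0 < a) (hb : 0 < b) (hr : 0 < r) :
    HasLaw (fun p : ℝ × ℝ ↦ p.1 + p.2) (gammaMeasure (a + b) r)
      ((gammaMeasure a r).prod (gammaMeasure b r)) where
  map_eq := gammaMeasure_conv_gammaMeasure ha hb hr

section

variable {Ω : Type*} {mΩ : MeasurableSpace Ω} {P : Measure Ω} {X : Ω → ℝ} {a r p : ℝ}

lemma integrable_rpow_of_hasLaw_gammaMeasure (hX : HasLaw X (gammaMeasure a r) P) (ha : 0 < a)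
    (hr : 0 < r) (hap : 0 < a + p) : Integrable (fun ω ↦ X ω ^ p) P := by
  have h := integrable_rpow_gammaMeasure ha hr hap
  rw [← hX.map_eq] at h
  exact h.comp_aemeasurable hX.aemeasurable

lemma integral_rpow_of_hasLaw_gammaMeasure (hX : HasLaw X (gammaMeasure a r) P) (ha : 0 < a)
    (hr : 0 < r) (hap : 0 < a + p) :
    ∫ ω, X ω ^ p ∂P = Real.Gamma (a + p) / (Real.Gamma a * r ^ p) := by
  rw [← integral_rpow_gammaMeasure ha hr hap, ← hX.integral_comp (by fun_prop)]
  rfl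

/-- The covariance function `𝔼[S_s S_t]` of subfractional Brownian motion with parameter `H`. -/
noncomputable def subfBmCovariance (H s t : ℝ) : ℝ :=
  t ^ (2 * H) + s ^ (2 * H) - (1 / 2) * ((t + s) ^ (2 * H) + |t - s| ^ (2 * H))

lemma integral_subfBmCovariance {H : ℝ} {S T : Ω → ℝ}
    (hS : Integrable (fun ω ↦ S ω ^ (2 * H)) P) (hT : Integrable (fun ω ↦ T ω ^ (2 * H)) P)
    (hadd : Integrable (fun ω ↦ (S ω + T ω) ^ (2 * H)) P)
    (hsub : Integrable (fun ω ↦ |S ω - T ω| ^ (2 * H)) P) :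
    ∫ ω, subfBmCovariance H (S ω) (T ω) ∂P =
      (∫ ω, T ω ^ (2 * H) ∂P) + (∫ ω, S ω ^ (2 * H) ∂P)
        - 1 / 2 * ((∫ ω, (S ω + T ω) ^ (2 * H) ∂P) + ∫ ω, |S ω - T ω| ^ (2 * H) ∂P) := by
  rw [← integral_add hT hS, ← integral_add hadd hsub, ← integral_const_mul,
    ← integral_sub (hT.fun_add hS) ((hadd.fun_add hsub).const_mul _)]
  simp only [subfBmCovariance, add_comm (T _), abs_sub_comm (T _)]

end

lemma integral_expMeasure_prod_expMeasure {E : Type*} [NormedAddCommGroup E] [NormedSpace ℝ E]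
    {q r : ℝ} (hq : 0 < q) (hr : 0 < r) (f : ℝ × ℝ → E) :
    ∫ p, f p ∂(expMeasure q).prod (expMeasure r) =
      ∫ p in Ioi 0 ×ˢ Ioi 0,
        (q * Real.exp (-(q * p.1)) * (r * Real.exp (-(r * p.2)))) • f p := by
  rw [expMeasure_eq_withDensity_restrict_Ioi, expMeasure_eq_withDensity_restrict_Ioi,
    prod_withDensity (by fun_prop) (by fun_prop), Measure.prod_restrict,
    integral_withDensity_eq_integral_toReal_smul (by fun_prop)
      (ae_of_all _ fun _ ↦ ENNReal.mul_lt_top ENNReal.ofReal_lt_top ENNReal.ofReal_lt_top),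
    ← Measure.volume_eq_prod]
  congr!
  rw [ENNReal.toReal_mul, ENNReal.toReal_ofReal (by positivity),
    ENNReal.toReal_ofReal (by positivity)]

lemma integral_subfBmCovariance_expMeasure {θ H : ℝ} (hθ : 0 < θ) (hH : -(1 / 2) < H) :
    ∫ p, subfBmCovariance H p.1 p.2 ∂(expMeasure θ).prod (expMeasure θ) =
      (1 - H) * Real.Gamma (2 * H + 1) / θ ^ (2 * H) := by
  have := isProbabilityMeasure_expMeasure hθ
  have hfst : HasLaw Prod.fst (expMeasure θ) ((expMeasure θ).prod (expMeasure θ)) :=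
    measurePreserving_fst.hasLaw
  have hsnd : HasLaw Prod.snd (expMeasure θ) ((expMeasure θ).prod (expMeasure θ)) :=
    measurePreserving_snd.hasLaw
  have hsum : HasLaw (fun p : ℝ × ℝ ↦ p.1 + p.2) (gammaMeasure (1 + 1) θ)
      ((expMeasure θ).prod (expMeasure θ)) := hasLaw_add_gammaMeasure one_pos one_pos hθ
  have hsub := hasLaw_abs_sub_expMeasure hθ
  have hexp : 0 < 1 + 2 * H := by linarith
  have hgam : 0 < 1 + 1 + 2 * H := by linarith
  have ifst := integrable_rpow_of_hasLaw_gammaMeasure hfst one_pos hθ hexp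
  have isnd := integrable_rpow_of_hasLaw_gammaMeasure hsnd one_pos hθ hexp
  have isum := integrable_rpow_of_hasLaw_gammaMeasure hsum (by norm_num) hθ hgam
  have isub := integrable_rpow_of_hasLaw_gammaMeasure hsub one_pos hθ hexp
  have hGamma : Real.Gamma (1 + 1 + 2 * H) = (2 * H + 1) * Real.Gamma (2 * H + 1) := by
    rw [← Real.Gamma_add_one (by linarith)]; ring_nf
  rw [integral_subfBmCovariance ifst isnd isum isub,
    integral_rpow_of_hasLaw_gammaMeasure hfst one_pos hθ hexp,
    integral_rpow_of_hasLaw_gammaMeasure hsnd one_pos hθ hexp,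
    integral_rpow_of_hasLaw_gammaMeasure hsum (by norm_num) hθ hgam,
    integral_rpow_of_hasLaw_gammaMeasure hsub one_pos hθ hexp, hGamma, one_add_one_eq_two,
    Real.Gamma_two, Real.Gamma_one, add_comm 1 (2 * H)]
  ring

theorem variance_zeta_subfBm_general {θ H : ℝ} (hθ : 0 < θ) (hH : -(1 / 2) < H) :
    θ ^ 2 * ∫ p in Set.Ioi (0 : ℝ) ×ˢ Set.Ioi (0 : ℝ),
        Real.exp (-θ * p.1) * Real.exp (-θ * p.2) *
          (p.2 ^ (2 * H) + p.1 ^ (2 * H)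
            - (1 / 2) * ((p.2 + p.1) ^ (2 * H) + |p.2 - p.1| ^ (2 * H)))
      = (1 - H) * Real.Gamma (2 * H + 1) / θ ^ (2 * H) := by
  rw [← integral_subfBmCovariance_expMeasure hθ hH, integral_expMeasure_prod_expMeasure hθ hθ,
    ← integral_const_mul]
  congr! 2
  simp only [smul_eq_mul, neg_mul, subfBmCovariance]
  ring

theorem variance_zeta_subfBm (θ H : ℝ) (hθ : 0 < θ) (hH : H ∈ Set.Ioo (0:ℝ) 1) :
    θ ^ 2 * ∫ p in Set.Ioi (0:ℝ) ×ˢ Set.Ioi (0:ℝ),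
        Real.exp (-θ * p.1) * Real.exp (-θ * p.2) *
          (p.2 ^ (2 * H) + p.1 ^ (2 * H)
            - (1 / 2) * ((p.2 + p.1) ^ (2 * H) + |p.2 - p.1| ^ (2 * H)))
      = (1 - H) * Real.Gamma (2 * H + 1) / θ ^ (2 * H) :=
  variance_zeta_subfBm_general hθ (by linarith [hH.1])
end

section
/- Let (Ω, F, P) be a probability space and let G : [0,∞) × Ω → ℝ be a stochastic process such that G_0 = 0, each G_t is measurable, the sample paths t ↦ G_t(ω) are continuous for every ω, and there exist constants c > 0 and γ ∈ (0,1) such that for all s, t ≥ 0 the increment G_t − G_s has the centered real Gaussian distribution N(0, v(s,t)) with variance v(s,t) ≤ c |t−s|^{2γ}. Then for every δ with γ < δ ≤ 1, almost surely G_T / T^δ → 0 as T → ∞ (the limit taken over real T → ∞). -/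
open MeasureTheory Filter Set ProbabilityTheory

/-!
Gaussian scaling turns the variance bound into `E |G_t - G_s| ^ p ≤ C |t - s| ^ (p γ)` for every
`p > 0`; once `q = p γ > 1`, Kolmogorov's chaining argument applies. Summing the increments along
the dyadic approximations of `t ∈ [0, L]` bounds `sup_{t ≤ L} |G_t - G_0| ^ p` by a weighted sum
`V_L` of `p`-th powers of dyadic increments, and `E V_L ≤ C' L ^ q`. For `δ > q / p = γ` the series
`∑ₙ E V_{2ⁿ} / 2 ^ (n p δ)` therefore converges, so almost surely its terms without the expectation
tend to zero, and the blocks `2ⁿ ≤ T < 2ⁿ⁺¹` carry this over to real `T`.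
-/

open scoped ENNReal NNReal Topology

section DyadicChaining

/-- The largest multiple of `2⁻ᵐ` that does not exceed `x`. -/
noncomputable def dyadicFloor (m : ℕ) (x : ℝ≥0) : ℝ≥0 := ⌊x * 2 ^ m⌋₊ / 2 ^ m

lemma dyadicFloor_le (m : ℕ) (x : ℝ≥0) : dyadicFloor m x ≤ x :=
  div_le_of_le_mul₀ (by positivity) (by positivity) (Nat.floor_le (by positivity))

lemma tendsto_dyadicFloor (x : ℝ≥0) : Tendsto (dyadicFloor · x) atTop (𝓝[≤] x) := by
  refine tendsto_nhdsWithin_iff.2 ⟨?_, .of_forall fun m ↦ dyadicFloor_le m x⟩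
  rw [← NNReal.tendsto_coe]
  have h := (tendsto_nat_floor_mul_div_atTop x.coe_nonneg).comp
    (tendsto_pow_atTop_atTop_of_one_lt (one_lt_two : (1 : ℝ) < 2))
  refine h.congr fun m ↦ ?_
  have hfloor : ⌊(x : ℝ) * 2 ^ m⌋₊ = ⌊x * 2 ^ m⌋₊ := Nonneg.nat_floor_coe (x * 2 ^ m)
  simp [dyadicFloor, hfloor]

variable {E : Type*} [PseudoEMetricSpace E] {f : ℝ≥0 → E} {x : ℝ≥0}

lemma edist_dyadicFloor_succ_le {m : ℕ} {b : ℝ≥0∞} (hx : x ≤ 1)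
    (hb : ∀ k : ℕ, k < 2 ^ (m + 1) →
      edist (f (k / 2 ^ (m + 1))) (f ((k + 1) / 2 ^ (m + 1))) ≤ b) :
    edist (f (dyadicFloor m x)) (f (dyadicFloor (m + 1) x)) ≤ b := by
  set k := ⌊x * 2 ^ (m + 1)⌋₊ with hk
  have hk_le : k ≤ 2 ^ (m + 1) :=
    Nat.floor_le_of_le (by simpa using hx)
  have hfloor : ⌊x * 2 ^ m⌋₊ = k / 2 := by
    rw [hk, ← Nat.floor_div_ofNat, pow_succ, ← mul_assoc, mul_div_cancel_right₀ _ two_ne_zero]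
  have hcoarse : dyadicFloor m x = (2 * (k / 2) : ℕ) / 2 ^ (m + 1) := by
    rw [dyadicFloor, hfloor, pow_succ]
    push_cast
    field_simp
  have hfine : dyadicFloor (m + 1) x = k / 2 ^ (m + 1) := rfl
  rw [hcoarse, hfine]
  rcases Nat.even_or_odd' k with ⟨j, hj | hj⟩
  · rw [show 2 * (k / 2) = k by omega, edist_self]
    exact zero_le
  · have hkj : 2 * (k / 2) = 2 * j := by omega
    have hj_lt : 2 * j < 2 ^ (m + 1) := by omega
    rw [hkj, hj]
    exact_mod_cast hb (2 * j) hj_lt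

lemma edist_zero_dyadicFloor_zero_le {b : ℝ≥0∞} (hx : x ≤ 1) (hb : edist (f 0) (f 1) ≤ b) :
    edist (f 0) (f (dyadicFloor 0 x)) ≤ b := by
  rcases hx.eq_or_lt with rfl | hx
  · simpa [dyadicFloor] using hb
  · simp [dyadicFloor, Nat.floor_eq_zero.2 hx]

theorem edist_le_tsum_of_dyadic_increments {b : ℕ → ℝ≥0∞} (hx : x ≤ 1)
    (hf : ContinuousWithinAt f (Iic x) x)
    (hb : ∀ m k : ℕ, k < 2 ^ m → edist (f (k / 2 ^ m)) (f ((k + 1) / 2 ^ m)) ≤ b m) :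
    edist (f 0) (f x) ≤ ∑' m, b m := by
  rw [tsum_eq_zero_add' ENNReal.summable]
  calc edist (f 0) (f x)
      ≤ edist (f 0) (f (dyadicFloor 0 x)) + edist (f (dyadicFloor 0 x)) (f x) :=
        edist_triangle _ _ _
    _ ≤ b 0 + ∑' m, b (m + 1) := by
        gcongr
        · exact edist_zero_dyadicFloor_zero_le hx (by simpa using hb 0 0)
        · exact edist_le_tsum_of_edist_le_of_tendsto₀ _
            (fun m ↦ edist_dyadicFloor_succ_le hx (hb (m + 1)))
            (hf.tendsto.comp (tendsto_dyadicFloor x))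

/-- The sum over all dyadic subintervals of `[0, 1]` of the `p`-th powers of the increments of `f`,
those over length `2⁻ᵐ` being first multiplied by `rᵐ`. For `r > 1` it bounds the distance of a
continuous `f` from `f 0`, and the moments of the increments bound its expectation when `f` is a
random path. -/
noncomputable def dyadicVariation (p : ℝ) (r : ℝ≥0∞) (f : ℝ≥0 → E) : ℝ≥0∞ :=
  ∑' m : ℕ, ∑ k ∈ Finset.range (2 ^ m),
    (r ^ m * edist (f (k / 2 ^ m)) (f ((k + 1) / 2 ^ m))) ^ p

theorem edist_le_dyadicVariation {p : ℝ} {r : ℝ≥0∞} (hp : 0 < p) (hr₀ : r ≠ 0) (hr : r ≠ ∞)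
    (hx : x ≤ 1) (hf : ContinuousWithinAt f (Iic x) x) :
    edist (f 0) (f x) ≤ dyadicVariation p r f ^ p⁻¹ * (1 - r⁻¹)⁻¹ := by
  rw [← ENNReal.tsum_geometric, ← ENNReal.tsum_mul_left]
  refine edist_le_tsum_of_dyadic_increments hx hf fun m k hk ↦ ?_
  have hterm : (r ^ m * edist (f (k / 2 ^ m)) (f ((k + 1) / 2 ^ m))) ^ p
      ≤ dyadicVariation p r f :=
    le_trans (Finset.single_le_sum (f := fun k : ℕ ↦
        (r ^ m * edist (f (k / 2 ^ m)) (f ((k + 1) / 2 ^ m))) ^ p)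
      (fun _ _ ↦ zero_le) (Finset.mem_range.2 hk)) (ENNReal.le_tsum m)
  rw [← ENNReal.inv_pow, ← div_eq_mul_inv,
    ENNReal.le_div_iff_mul_le (.inl (pow_ne_zero m hr₀)) (.inl (ENNReal.pow_ne_top hr)), mul_comm]
  exact (ENNReal.le_rpow_inv_iff hp).2 hterm

end DyadicChaining

lemma tendsto_div_rpow_atTop_of_dyadic_bound {h : ℝ≥0 → ℝ≥0∞} {a : ℕ → ℝ≥0∞} {δ : ℝ} (hδ : 0 ≤ δ)
    (hle : ∀ n : ℕ, ∀ t ≤ 2 ^ n, h t ≤ a n)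
    (ha : Tendsto (fun n : ℕ ↦ a n / (2 ^ n) ^ δ) atTop (𝓝 0)) :
    Tendsto (fun t : ℝ≥0 ↦ h t / (t : ℝ≥0∞) ^ δ) atTop (𝓝 0) := by
  have ha' : Tendsto (fun n : ℕ ↦ 2 ^ δ * (a n / (2 ^ n) ^ δ)) atTop (𝓝 0) := by
    simpa using ENNReal.Tendsto.const_mul ha (.inr (by finiteness : (2 : ℝ≥0∞) ^ δ ≠ ∞))
  rw [ENNReal.tendsto_nhds_zero] at ha' ⊢
  intro ε hε
  obtain ⟨N, hN⟩ := eventually_atTop.1 (ha' ε hε)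
  filter_upwards [eventually_ge_atTop (2 ^ N)] with t ht
  obtain ⟨n, hn_le, hn_lt⟩ :=
    exists_nat_pow_near ((one_le_pow₀ one_le_two).trans ht) (one_lt_two : (1 : ℝ≥0) < 2)
  have hNn : N ≤ n + 1 := (pow_le_pow_iff_right₀ one_lt_two).1 (ht.trans hn_lt.le)
  calc h t / (t : ℝ≥0∞) ^ δ
      ≤ a (n + 1) / (2 ^ n) ^ δ := by
        gcongr
        · exact hle _ _ hn_lt.le
        · exact_mod_cast hn_le
    _ = 2 ^ δ * (a (n + 1) / (2 ^ (n + 1)) ^ δ) := by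
        rw [pow_succ, ENNReal.mul_rpow_of_nonneg _ _ hδ, mul_comm ((2 ^ n) ^ δ), ← mul_div_assoc,
          ENNReal.mul_div_mul_left _ _ (by simp) (by finiteness)]
    _ ≤ ε := hN _ hNn

lemma lipschitzWith_const_mul (c : ℝ≥0) : LipschitzWith c (c * · : ℝ≥0 → ℝ≥0) :=
  .of_dist_le_mul fun x y ↦ by simp [NNReal.dist_eq, ← mul_sub, abs_mul]

lemma edist_dyadic_succ (m k : ℕ) :
    edist ((k : ℝ≥0) / 2 ^ m) ((k + 1) / 2 ^ m) = 2⁻¹ ^ m := by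
  rw [edist_nndist, NNReal.nndist_eq, add_div, tsub_eq_zero_of_le le_self_add, add_tsub_cancel_left]
  simp [ENNReal.inv_pow]

lemma exists_one_lt_two_mul_rpow_mul_lt_one {p q : ℝ} (hp : 0 < p) (hq : 1 < q) :
    ∃ r : ℝ≥0∞, 1 < r ∧ r ≠ ∞ ∧ 2 * r ^ p * 2⁻¹ ^ q < 1 := by
  obtain ⟨a, ha₀, ha⟩ := exists_between (div_pos (sub_pos.2 hq) hp)
  refine ⟨2 ^ a, ENNReal.one_lt_rpow ENNReal.one_lt_two ha₀, by finiteness, ?_⟩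
  have hneg : 1 + a * p + -q < 0 := by linarith [(lt_div_iff₀ hp).1 ha]
  calc 2 * ((2 : ℝ≥0∞) ^ a) ^ p * 2⁻¹ ^ q = 2 ^ (1 + a * p + -q) := by
        rw [ENNReal.rpow_add _ _ (by simp) (by simp), ENNReal.rpow_add _ _ (by simp) (by simp),
          ENNReal.rpow_one, ENNReal.rpow_mul, ENNReal.rpow_neg, ENNReal.inv_rpow]
    _ < 1 := ENNReal.rpow_lt_one_of_one_lt_of_neg ENNReal.one_lt_two hneg

lemma ae_tendsto_zero_of_tsum_lintegral_ne_top {Ω : Type*} {mΩ : MeasurableSpace Ω} {μ : Measure Ω}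
    {F : ℕ → Ω → ℝ≥0∞} (hF : ∀ n, AEMeasurable (F n) μ) (hsum : ∑' n, ∫⁻ ω, F n ω ∂μ ≠ ∞) :
    ∀ᵐ ω ∂μ, Tendsto (F · ω) atTop (𝓝 0) := by
  rw [← lintegral_tsum hF] at hsum
  filter_upwards [ae_lt_top' (.tsum hF) hsum] with ω hω
  exact ENNReal.tendsto_atTop_zero_of_tsum_ne_top hω.ne

section KolmogorovProcess

variable {Ω E : Type*} {mΩ : MeasurableSpace Ω} {P : Measure Ω} [PseudoEMetricSpace E]
  {p q : ℝ} {M : ℝ≥0}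

lemma isAEKolmogorovProcess_comp_lipschitzWith {S T : Type*}
    [PseudoEMetricSpace S] [PseudoEMetricSpace T] {X : T → Ω → E}
    (hX : IsAEKolmogorovProcess X P p q M) {K : ℝ≥0} {φ : S → T} (hφ : LipschitzWith K φ) :
    IsAEKolmogorovProcess (fun s ↦ X (φ s)) P p q (M * K ^ q) := by
  obtain ⟨Y, hY, hXY⟩ := hX
  refine ⟨fun s ↦ Y (φ s), ⟨fun s t ↦ hY.measurablePair _ _, fun s t ↦ ?_, hY.p_pos, hY.q_pos⟩,
    fun s ↦ hXY (φ s)⟩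
  calc ∫⁻ ω, edist (Y (φ s) ω) (Y (φ t) ω) ^ p ∂P
      ≤ M * edist (φ s) (φ t) ^ q := hY.kolmogorovCondition _ _
    _ ≤ M * (K * edist s t) ^ q := by
        gcongr
        · exact hY.q_pos.le
        · exact hφ s t
    _ = (M * K ^ q : ℝ≥0) * edist s t ^ q := by
        rw [ENNReal.mul_rpow_of_nonneg _ _ hY.q_pos.le, ENNReal.coe_mul,
          ENNReal.coe_rpow_of_nonneg _ hY.q_pos.le, mul_assoc]

variable {X : ℝ≥0 → Ω → E}

lemma aemeasurable_dyadicVariation (hX : IsAEKolmogorovProcess X P p q M) (r : ℝ≥0∞) :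
    AEMeasurable (fun ω ↦ dyadicVariation p r (X · ω)) P :=
  .tsum fun _ ↦ Finset.aemeasurable_fun_sum _ fun _ _ ↦
    (hX.aemeasurable_edist.const_mul _).pow_const _

theorem lintegral_dyadicVariation_le (hX : IsAEKolmogorovProcess X P p q M) (r : ℝ≥0∞) :
    ∫⁻ ω, dyadicVariation p r (X · ω) ∂P ≤ M * (1 - 2 * r ^ p * 2⁻¹ ^ q)⁻¹ := by
  have hmeas (m k : ℕ) : AEMeasurable
      (fun ω ↦ (r ^ m * edist (X (k / 2 ^ m) ω) (X ((k + 1) / 2 ^ m) ω)) ^ p) P :=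
    (hX.aemeasurable_edist.const_mul _).pow_const _
  have hincr (m k : ℕ) :
      ∫⁻ ω, (r ^ m * edist (X (k / 2 ^ m) ω) (X ((k + 1) / 2 ^ m) ω)) ^ p ∂P
        ≤ M * (r ^ p * 2⁻¹ ^ q) ^ m := by
    simp_rw [ENNReal.mul_rpow_of_nonneg _ _ hX.p_pos.le]
    rw [lintegral_const_mul'' _ (hX.aemeasurable_edist.pow_const p)]
    calc (r ^ m) ^ p * ∫⁻ ω, edist (X (k / 2 ^ m) ω) (X ((k + 1) / 2 ^ m) ω) ^ p ∂P
        ≤ (r ^ m) ^ p * (M * (2⁻¹ ^ m) ^ q) := by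
          gcongr
          exact edist_dyadic_succ m k ▸ hX.kolmogorovCondition _ _
      _ = M * (r ^ p * 2⁻¹ ^ q) ^ m := by
          simp_rw [← ENNReal.rpow_natCast, ← ENNReal.rpow_mul, mul_comm (m : ℝ), ENNReal.rpow_mul]
          rw [ENNReal.mul_rpow_of_nonneg _ _ m.cast_nonneg]
          ring
  simp_rw [dyadicVariation]
  rw [lintegral_tsum fun m ↦ Finset.aemeasurable_fun_sum _ fun k _ ↦ hmeas m k,
    ← ENNReal.tsum_geometric, ← ENNReal.tsum_mul_left]
  refine ENNReal.tsum_le_tsum fun m ↦ ?_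
  rw [lintegral_finsetSum' _ fun k _ ↦ hmeas m k]
  calc ∑ k ∈ Finset.range (2 ^ m),
        ∫⁻ ω, (r ^ m * edist (X (k / 2 ^ m) ω) (X ((k + 1) / 2 ^ m) ω)) ^ p ∂P
      ≤ ∑ _k ∈ Finset.range (2 ^ m), M * (r ^ p * 2⁻¹ ^ q) ^ m :=
        Finset.sum_le_sum fun k _ ↦ hincr m k
    _ = M * (2 * r ^ p * 2⁻¹ ^ q) ^ m := by
        rw [Finset.sum_const, Finset.card_range, nsmul_eq_mul, mul_assoc 2, mul_pow 2]
        push_cast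
        ring

lemma ae_tendsto_dyadicVariation_div_rpow (hX : IsAEKolmogorovProcess X P p q M) {r : ℝ≥0∞}
    (hr : 2 * r ^ p * 2⁻¹ ^ q < 1) {s : ℝ} (hs : q < s) :
    ∀ᵐ ω ∂P, Tendsto
      (fun n : ℕ ↦ dyadicVariation p r (fun x ↦ X (2 ^ n * x) ω) / (2 ^ n) ^ s) atTop (𝓝 0) := by
  have hscaled (n : ℕ) :
      IsAEKolmogorovProcess (fun x ↦ X (2 ^ n * x)) P p q (M * (2 ^ n) ^ q) :=
    isAEKolmogorovProcess_comp_lipschitzWith hX (lipschitzWith_const_mul _)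
  refine ae_tendsto_zero_of_tsum_lintegral_ne_top
    (fun n ↦ (aemeasurable_dyadicVariation (hscaled n) r).div_const _) ?_
  set C : ℝ≥0∞ := M * (1 - 2 * r ^ p * 2⁻¹ ^ q)⁻¹
  have hC_ne_top : C ≠ ∞ :=
    ENNReal.mul_ne_top ENNReal.coe_ne_top (ENNReal.inv_ne_top.2 (tsub_pos_of_lt hr).ne')
  have hbound (n : ℕ) :
      ∫⁻ ω, dyadicVariation p r (fun x ↦ X (2 ^ n * x) ω) / (2 ^ n) ^ s ∂P
        ≤ C * (2 ^ (q - s)) ^ n := by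
    simp_rw [div_eq_mul_inv]
    rw [lintegral_mul_const'' _ (aemeasurable_dyadicVariation (hscaled n) r)]
    calc (∫⁻ ω, dyadicVariation p r (fun x ↦ X (2 ^ n * x) ω) ∂P) * ((2 ^ n) ^ s)⁻¹
        ≤ (M * (2 ^ n) ^ q : ℝ≥0) * (1 - 2 * r ^ p * 2⁻¹ ^ q)⁻¹ * ((2 ^ n) ^ s)⁻¹ := by
          gcongr
          exact lintegral_dyadicVariation_le (hscaled n) r
      _ = C * ((2 ^ n) ^ q * ((2 ^ n) ^ s)⁻¹) := by
          push_cast [ENNReal.coe_rpow_of_nonneg _ hX.q_pos.le]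
          ring
      _ = C * (2 ^ (q - s)) ^ n := by
          rw [← ENNReal.rpow_neg, ← ENNReal.rpow_add _ _ (by simp) (by simp), ← sub_eq_add_neg,
            ← ENNReal.rpow_natCast, ← ENNReal.rpow_mul, mul_comm (n : ℝ), ENNReal.rpow_mul,
            ENNReal.rpow_natCast]
  refine ne_top_of_le_ne_top ?_ (ENNReal.tsum_le_tsum hbound)
  rw [ENNReal.tsum_mul_left, ENNReal.tsum_geometric]
  have hratio : (2 : ℝ≥0∞) ^ (q - s) < 1 :=
    ENNReal.rpow_lt_one_of_one_lt_of_neg ENNReal.one_lt_two (sub_neg.2 hs)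
  exact ENNReal.mul_ne_top hC_ne_top (ENNReal.inv_ne_top.2 (tsub_pos_of_lt hratio).ne')

theorem ae_tendsto_edist_div_rpow_atTop
    (hX : IsAEKolmogorovProcess X P p q M) (hcont : ∀ᵐ ω ∂P, Continuous (X · ω))
    (hq : 1 < q) {δ : ℝ} (hδ : q / p < δ) :
    ∀ᵐ ω ∂P, Tendsto (fun t : ℝ≥0 ↦ edist (X 0 ω) (X t ω) / (t : ℝ≥0∞) ^ δ) atTop (𝓝 0) := by
  have hp : 0 < p := hX.p_pos
  have hδ₀ : 0 < δ := (div_pos hX.q_pos hp).trans hδ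
  obtain ⟨r, hr, hr_ne_top, hratio⟩ := exists_one_lt_two_mul_rpow_mul_lt_one hp hq
  set C : ℝ≥0∞ := (1 - r⁻¹)⁻¹
  have hC : C ≠ ∞ :=
    ENNReal.inv_ne_top.2 (tsub_pos_of_lt (ENNReal.inv_lt_one.2 hr)).ne'
  filter_upwards [hcont,
    ae_tendsto_dyadicVariation_div_rpow hX hratio ((div_lt_iff₀' hp).1 hδ)] with ω hω hvar
  set V : ℕ → ℝ≥0∞ := fun n ↦ dyadicVariation p r (fun x ↦ X (2 ^ n * x) ω)
  refine tendsto_div_rpow_atTop_of_dyadic_bound (a := fun n ↦ V n ^ p⁻¹ * C) hδ₀.le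
    (fun n t ht ↦ ?_) ?_
  · have hscale : Continuous fun x ↦ X (2 ^ n * x) ω := hω.comp (continuous_const_mul (2 ^ n))
    have h := edist_le_dyadicVariation (x := t / 2 ^ n) hp (zero_lt_one.trans hr).ne' hr_ne_top
      (div_le_one_of_le₀ ht (by positivity)) hscale.continuousWithinAt
    simpa [mul_div_cancel₀] using h
  · have hroot := ENNReal.Tendsto.mul_const (hvar.ennrpow_const p⁻¹) (.inr hC)
    rw [ENNReal.zero_rpow_of_pos (inv_pos.2 hp), zero_mul] at hroot
    refine hroot.congr fun n ↦ ?_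
    rw [ENNReal.div_rpow_of_nonneg _ _ (inv_nonneg.2 hp.le), mul_comm p, ENNReal.rpow_mul,
      ENNReal.rpow_rpow_inv hp.ne', ENNReal.mul_div_right_comm]

theorem ae_isLittleO_rpow_of_isAEKolmogorovProcess {E : Type*} [NormedAddCommGroup E]
    {X : ℝ≥0 → Ω → E} (hX : IsAEKolmogorovProcess X P p q M)
    (hcont : ∀ᵐ ω ∂P, Continuous (X · ω)) (hq : 1 < q) {δ : ℝ} (hδ : q / p < δ) :
    ∀ᵐ ω ∂P, (X · ω) =o[atTop] fun t : ℝ≥0 ↦ (t : ℝ) ^ δ := by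
  have hδ₀ : 0 < δ := (div_pos hX.q_pos hX.p_pos).trans hδ
  have hpow : Tendsto (fun t : ℝ≥0 ↦ (t : ℝ) ^ δ) atTop atTop :=
    (tendsto_rpow_atTop hδ₀).comp (NNReal.tendsto_coe_atTop.2 tendsto_id)
  filter_upwards [ae_tendsto_edist_div_rpow_atTop hX hcont hq hδ] with ω hω
  have hconst : (fun _ ↦ X 0 ω) =o[atTop] fun t : ℝ≥0 ↦ (t : ℝ) ^ δ :=
    Asymptotics.isLittleO_const_left.2 (.inr (tendsto_norm_atTop_atTop.comp hpow))
  have hincr : (fun t ↦ X t ω - X 0 ω) =o[atTop] fun t : ℝ≥0 ↦ (t : ℝ) ^ δ := by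
    rw [← Asymptotics.isLittleO_norm_left, Asymptotics.isLittleO_iff_tendsto']
    · refine ((ENNReal.tendsto_toReal ENNReal.zero_ne_top).comp hω).congr fun t ↦ ?_
      simp [edist_comm (X 0 ω), edist_eq_enorm_sub, ENNReal.toReal_div, ← ENNReal.toReal_rpow]
    · filter_upwards [hpow.eventually_gt_atTop 0] with t ht h₀
      exact absurd h₀ ht.ne'
  simpa using hincr.add hconst

end KolmogorovProcess

section GaussianIncrements

variable {Ω : Type*} {mΩ : MeasurableSpace Ω} {P : Measure Ω}

lemma lintegral_enorm_rpow_of_hasLaw_gaussianReal {X : Ω → ℝ} {v : ℝ≥0}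
    (hX : HasLaw X (gaussianReal 0 v) P) {p : ℝ} (hp : 0 ≤ p) :
    ∫⁻ ω, ‖X ω‖ₑ ^ p ∂P = v ^ (p / 2) * ∫⁻ x, ‖x‖ₑ ^ p ∂gaussianReal 0 1 := by
  have hscale : HasLaw (fun x ↦ √v * x) (gaussianReal 0 v) (gaussianReal 0 1) := by
    have h := gaussianReal_const_mul (HasLaw.id (μ := gaussianReal 0 1)) √v
    simpa using h
  have hsqrt : ‖√(v : ℝ)‖ₑ ^ p = (v : ℝ≥0∞) ^ (p / 2) := by
    rw [Real.enorm_of_nonneg (by positivity), Real.sqrt_eq_rpow,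
      ← ENNReal.ofReal_rpow_of_nonneg v.coe_nonneg (by positivity), ENNReal.ofReal_coe_nnreal,
      ← ENNReal.rpow_mul]
    ring_nf
  rw [hX.lintegral_comp (f := fun x ↦ ‖x‖ₑ ^ p) (by fun_prop),
    ← hscale.lintegral_comp (f := fun x ↦ ‖x‖ₑ ^ p) (by fun_prop)]
  simp_rw [enorm_mul, ENNReal.mul_rpow_of_nonneg _ _ hp, hsqrt]
  exact lintegral_const_mul _ (by fun_prop)

lemma lintegral_enorm_rpow_gaussianReal_ne_top (μ : ℝ) (v : ℝ≥0) {p : ℝ} (hp : 0 < p) :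
    ∫⁻ x, ‖x‖ₑ ^ p ∂gaussianReal μ v ≠ ∞ := by
  have h := memLp_id_gaussianReal' (μ := μ) (v := v) (ENNReal.ofReal p) ENNReal.ofReal_ne_top
  have h' := lintegral_rpow_enorm_lt_top_of_eLpNorm_lt_top (by simpa) (by simp) h.2
  simpa [hp.le] using h'.ne

theorem exists_isKolmogorovProcess_of_gaussian_increments {T : Type*}
    [PseudoEMetricSpace T] {X : T → Ω → ℝ} {v : T → T → ℝ≥0} {c : ℝ≥0} {γ p : ℝ}
    (hmeas : ∀ t, Measurable (X t))
    (hlaw : ∀ s t, HasLaw (X t - X s) (gaussianReal 0 (v s t)) P)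
    (hvar : ∀ s t, v s t ≤ c * edist s t ^ (2 * γ)) (hγ : 0 < γ) (hp : 0 < p) :
    ∃ M, IsKolmogorovProcess X P p (p * γ) M := by
  set m := ∫⁻ x, ‖x‖ₑ ^ p ∂gaussianReal 0 1
  have hm : m ≠ ∞ := lintegral_enorm_rpow_gaussianReal_ne_top 0 1 hp
  refine ⟨c ^ (p / 2) * m.toNNReal,
    .mk_of_secondCountableTopology hmeas (fun s t ↦ ?_) hp (by positivity)⟩
  calc ∫⁻ ω, edist (X s ω) (X t ω) ^ p ∂P
      = ∫⁻ ω, ‖(X t - X s) ω‖ₑ ^ p ∂P := by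
        simp_rw [edist_comm (X s _), edist_eq_enorm_sub, Pi.sub_apply]
    _ = v s t ^ (p / 2) * m := lintegral_enorm_rpow_of_hasLaw_gaussianReal (hlaw s t) hp.le
    _ ≤ (c * edist s t ^ (2 * γ)) ^ (p / 2) * m := by
        gcongr
        exact hvar s t
    _ = (c ^ (p / 2) * m.toNNReal : ℝ≥0) * edist s t ^ (p * γ) := by
        rw [ENNReal.mul_rpow_of_nonneg _ _ (by positivity), ← ENNReal.rpow_mul, ENNReal.coe_mul,
          ENNReal.coe_toNNReal hm, ENNReal.coe_rpow_of_nonneg _ (by positivity)]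
        ring_nf

theorem ae_isLittleO_rpow_of_gaussian_increments {X : ℝ≥0 → Ω → ℝ} {v : ℝ≥0 → ℝ≥0 → ℝ≥0} {c : ℝ≥0}
    {γ δ : ℝ} (hmeas : ∀ t, Measurable (X t)) (hcont : ∀ᵐ ω ∂P, Continuous (X · ω))
    (hlaw : ∀ s t, HasLaw (X t - X s) (gaussianReal 0 (v s t)) P)
    (hvar : ∀ s t, v s t ≤ c * edist s t ^ (2 * γ)) (hγ : 0 < γ) (hδ : γ < δ) :
    ∀ᵐ ω ∂P, (X · ω) =o[atTop] fun t : ℝ≥0 ↦ (t : ℝ) ^ δ := by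
  obtain ⟨M, hX⟩ : ∃ M, IsKolmogorovProcess X P (2 / γ) (2 / γ * γ) M :=
    exists_isKolmogorovProcess_of_gaussian_increments hmeas hlaw hvar hγ (by positivity)
  rw [div_mul_cancel₀ _ hγ.ne'] at hX
  exact ae_isLittleO_rpow_of_isAEKolmogorovProcess hX.IsAEKolmogorovProcess hcont one_lt_two
    (by rwa [div_div_cancel₀ two_ne_zero])

end GaussianIncrements

theorem gaussian_process_growth_general
    {Ω : Type*} [MeasurableSpace Ω] (P : Measure Ω)
    (G : ℝ → Ω → ℝ) (v : ℝ → ℝ → ℝ≥0) (c γ : ℝ) (hγ : 0 < γ)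
    (hmeas : ∀ t, 0 ≤ t → Measurable (G t))
    (hcont : ∀ᵐ ω ∂P, ContinuousOn (fun t ↦ G t ω) (Ici 0))
    (hgauss : ∀ s t, 0 ≤ s → 0 ≤ t →
      P.map (fun ω ↦ G t ω - G s ω) = gaussianReal 0 (v s t))
    (hvar : ∀ s t, 0 ≤ s → 0 ≤ t → (v s t : ℝ) ≤ c * |t - s| ^ (2 * γ))
    (δ : ℝ) (hδγ : γ < δ) :
    ∀ᵐ ω ∂P, Tendsto (fun T : ℝ ↦ G T ω / T ^ δ) atTop (𝓝 0) := by
  have hlaw (s t : ℝ≥0) : HasLaw (G t - G s) (gaussianReal 0 (v s t)) P :=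
    ⟨((hmeas t t.2).sub (hmeas s s.2)).aemeasurable, hgauss s t s.2 t.2⟩
  have hvar' (s t : ℝ≥0) : (v s t : ℝ≥0∞) ≤ c.toNNReal * edist s t ^ (2 * γ) := by
    have h := ENNReal.ofReal_le_ofReal (hvar s t s.2 t.2)
    rwa [ENNReal.ofReal_coe_nnreal, ENNReal.ofReal_mul' (by positivity),
      ← ENNReal.ofReal_rpow_of_nonneg (abs_nonneg _) (by positivity),
      ← NNReal.dist_eq, ← edist_dist, edist_comm] at h
  have hcont' : ∀ᵐ ω ∂P, Continuous fun t : ℝ≥0 ↦ G t ω :=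
    hcont.mono fun ω hω ↦ hω.comp_continuous NNReal.continuous_coe fun t ↦ t.2
  filter_upwards [ae_isLittleO_rpow_of_gaussian_increments (X := fun t : ℝ≥0 ↦ G t)
    (fun t ↦ hmeas t t.2) hcont' hlaw hvar' hγ hδγ] with ω hω
  refine (hω.tendsto_div_nhds_zero.comp tendsto_real_toNNReal_atTop).congr' ?_
  filter_upwards [eventually_ge_atTop 0] with T hT
  simp [hT]

theorem gaussian_process_growth
    {Ω : Type*} [MeasurableSpace Ω] (P : Measure Ω) [IsProbabilityMeasure P]
    (G : ℝ → Ω → ℝ) (v : ℝ → ℝ → NNReal) (c γ : ℝ)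
    (hc : 0 < c) (hγ : γ ∈ Set.Ioo (0:ℝ) 1)
    (hG0 : ∀ ω, G 0 ω = 0)
    (hmeas : ∀ t, Measurable (G t))
    (hcont : ∀ ω, ContinuousOn (fun t => G t ω) (Set.Ici 0))
    (hgauss : ∀ s t, 0 ≤ s → 0 ≤ t →
      P.map (fun ω => G t ω - G s ω) = gaussianReal 0 (v s t))
    (hvar : ∀ s t, 0 ≤ s → 0 ≤ t → (v s t : ℝ) ≤ c * |t - s| ^ (2 * γ))
    (δ : ℝ) (hδγ : γ < δ) (hδ1 : δ ≤ 1) :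
    ∀ᵐ ω ∂P, Filter.Tendsto (fun T : ℝ => G T ω / T ^ δ) Filter.atTop (nhds 0) :=
  gaussian_process_growth_general P G v c γ hγ.1 (fun t _ ↦ hmeas t) (.of_forall hcont) hgauss hvar
    δ hδγ
end
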